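/- (Pointwise domination of the auxiliary maximal function) Let W be a matrix A_2 weight on ℝ^d with characteristic [W]_{A_2}, and define M_W' f(x) = sup_{I ∋ x} (1/|I|)∫_I |(m_I(W^{-1}))^{-1/2} W^{-1/2}(y) f(y)| dy, the supremum over dyadic cubes containing x. Then there exists ε ≈ [W]_{A_2}^{-1} and a constant c (depending only on n, d) such that M_W' f(x) ≤ c (M(|f|^{(2+ε)/(1+ε)})(x))^{(1+ε)/(2+ε)} for a.e. x, where M is the unweighted Hardy–Littlewood dyadic maximal function. Consequently ‖M_W'‖²_{L²→L²} ≲ [W]_{A_2}. -/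

import Mathlib

open MeasureTheory Matrix
open scoped ComplexOrder

/-- The operator norm on `n × n` complex matrices induced by the Euclidean norm. -/
noncomputable def matNorm {n : ℕ} (M : Matrix (Fin n) (Fin n) ℂ) : ℝ :=
  ‖(Matrix.toEuclideanCLM (𝕜 := ℂ) M : EuclideanSpace ℂ (Fin n) →L[ℂ] EuclideanSpace ℂ (Fin n))‖

/-- The Euclidean norm of a vector in `ℂⁿ`. -/
noncomputable def vecNorm {n : ℕ} (v : Fin n → ℂ) : ℝ :=
  ‖(WithLp.equiv 2 (Fin n → ℂ)).symm v‖

/-- A (half-open, axis-parallel) cube in `ℝ^d`. -/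
def IsCube {d : ℕ} (I : Set (Fin d → ℝ)) : Prop :=
  ∃ (a : Fin d → ℝ) (ℓ : ℝ), 0 < ℓ ∧ I = Set.univ.pi fun i => Set.Ico (a i) (a i + ℓ)

/-- The average `(1/|I|) ∫_I g` of a scalar function over a set `I`. -/
noncomputable def avg {d : ℕ} (I : Set (Fin d → ℝ)) (g : (Fin d → ℝ) → ℝ) : ℝ :=
  (volume I).toReal⁻¹ * ∫ x in I, g x

/-- The (entrywise) average of a vector-valued function over a set `I`. -/
noncomputable def vavg {d n : ℕ} (I : Set (Fin d → ℝ)) (f : (Fin d → ℝ) → Fin n → ℂ) :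
    Fin n → ℂ :=
  fun i => (volume I).toReal⁻¹ • (∫ x in I, f x i)

/-- The (entrywise) average of a matrix-valued function over a set `I`. -/
noncomputable def mavg {d n : ℕ} (I : Set (Fin d → ℝ))
    (F : (Fin d → ℝ) → Matrix (Fin n) (Fin n) ℂ) : Matrix (Fin n) (Fin n) ℂ :=
  Matrix.of fun i j => (volume I).toReal⁻¹ • (∫ x in I, F x i j)
open scoped ENNReal

/-- The dyadic cube of generation `k` indexed by `m ∈ ℤ^d`. -/
def dCube (d : ℕ) (I : ℤ × (Fin d → ℤ)) : Set (Fin d → ℝ) :=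
  Set.univ.pi fun i =>
    Set.Ico ((I.2 i : ℝ) * (2 : ℝ) ^ (-I.1)) (((I.2 i : ℝ) + 1) * (2 : ℝ) ^ (-I.1))

/-- The Euclidean norm of a vector of `ℂⁿ`, valued in `ℝ≥0∞`. -/
noncomputable def vecENorm {n : ℕ} (v : Fin n → ℂ) : ℝ≥0∞ := ENNReal.ofReal (vecNorm v)

/-- The auxiliary weighted maximal function
`M_W' f(x) = sup_{I ∋ x} (1/|I|) ∫_I |(m_I(W^{-1}))^{-1/2} W^{-1/2}(y) f(y)| dy`,
the supremum over dyadic cubes; `R I` plays the role of `(m_I(W^{-1}))^{-1/2}` and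
`Winvhalf` that of `W^{-1/2}`. -/
noncomputable def MWaux {d n : ℕ} (R : ℤ × (Fin d → ℤ) → Matrix (Fin n) (Fin n) ℂ)
    (Winvhalf : (Fin d → ℝ) → Matrix (Fin n) (Fin n) ℂ)
    (f : (Fin d → ℝ) → Fin n → ℂ) (x : Fin d → ℝ) : ℝ≥0∞ :=
  ⨆ (I : ℤ × (Fin d → ℤ)) (_ : x ∈ dCube d I),
    (volume (dCube d I))⁻¹ *
      ∫⁻ y in dCube d I, vecENorm ((R I).mulVec ((Winvhalf y).mulVec (f y)))

/-- The unweighted dyadic Hardy–Littlewood maximal function. -/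
noncomputable def dyadicMax {d : ℕ} (g : (Fin d → ℝ) → ℝ≥0∞) (x : Fin d → ℝ) : ℝ≥0∞ :=
  ⨆ (I : ℤ × (Fin d → ℤ)) (_ : x ∈ dCube d I),
    (volume (dCube d I))⁻¹ * ∫⁻ y in dCube d I, g y

/-!
The columns of `R_I = (m_I(W⁻¹))^{-1/2}` are vectors `v` with `⟨m_I(W⁻¹) v, v⟩ = 1`, so that
`|R_I W^{-1/2} f| ≤ |f| ∑_v w_v^{1/2}` for the scalar weights `w_v = ⟨W⁻¹ v, v⟩`, of average one
over `I`. Testing the matrix `A₂` condition on `v` and using the Cauchy–Schwarz inequality together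
with Markov's inequality shows that `w_v` exceeds a multiple `≈ 1 / A` of its average on at least
half of every dyadic cube, where `A` is the characteristic. A Calderón–Zygmund stopping argument
turns this into `∫_{w_v > t} w_v ≤ C t |{w_v > t / B}|` for `t ≥ m_I(w_v)`, with `B ≈ A`, and
integrating in `t` gives a reverse Hölder inequality with exponent `1 + ε / 2`, `ε ≈ 1 / A`.
Hölder's inequality now yields the pointwise bound. The `L²` bound follows from the `L^r` bound of
the dyadic maximal function with constant `≈ 1 / (r - 1)`, for `r = 2 (1 + ε) / (2 + ε)`, since
`r - 1 ≈ ε`.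
-/

section LayerCake

variable {α : Type*} [MeasurableSpace α] {μ ν : Measure α} {f g w : α → ℝ≥0∞} {p δ : ℝ}

theorem lintegral_rpow_eq_lintegral_Ioi_meas_lt (hf : AEMeasurable f μ) (hp : 0 < p) :
    ∫⁻ a, f a ^ p ∂μ = ENNReal.ofReal p *
      ∫⁻ t in Set.Ioi (0 : ℝ), μ {a | ENNReal.ofReal t < f a} * ENNReal.ofReal (t ^ (p - 1)) := by
  by_cases htop : μ {a | f a = ∞} = 0
  · have hfin : ∀ᵐ a ∂μ, f a ≠ ∞ := by simpa only [ae_iff, not_not] using htop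
    have key := lintegral_rpow_eq_lintegral_meas_lt_mul μ
      (ae_of_all _ fun a => ENNReal.toReal_nonneg) hf.ennreal_toReal hp
    have hpow : ∫⁻ a, f a ^ p ∂μ = ∫⁻ a, ENNReal.ofReal ((f a).toReal ^ p) ∂μ := by
      refine lintegral_congr_ae (hfin.mono fun a ha => ?_)
      dsimp only
      rw [← ENNReal.ofReal_rpow_of_nonneg ENNReal.toReal_nonneg hp.le, ENNReal.ofReal_toReal ha]
    rw [hpow, key]
    refine congrArg _ (setLIntegral_congr_fun measurableSet_Ioi fun t _ => ?_)
    refine congrArg (· * ENNReal.ofReal (t ^ (p - 1))) (measure_congr (hfin.mono fun a ha => ?_))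
    exact propext (ENNReal.ofReal_lt_iff_lt_toReal (le_of_lt ‹_›) ha).symm
  · have hpowtop : {a | f a = ∞} ⊆ {a | f a ^ p = ∞} := fun a ha => by
      simp only [Set.mem_ofPred_eq] at ha ⊢
      rw [ha, ENNReal.top_rpow_of_pos hp]
    have hdiv : ∫⁻ t in Set.Ioi (0 : ℝ), ENNReal.ofReal (t ^ (p - 1)) = ∞ := by
      by_contra hne
      exact not_integrableOn_Ioi_rpow (p - 1) ((lintegral_ofReal_ne_top_iff_integrable
        (by fun_prop) (ae_restrict_of_forall_mem measurableSet_Ioi fun t ht =>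
          Real.rpow_nonneg (le_of_lt ht) _)).1 hne)
    rw [lintegral_eq_top_of_measure_eq_top_ne_zero (hf.pow_const p)
      (fun h => htop (measure_mono_null hpowtop h)), eq_comm, eq_top_iff]
    calc ∞ = ENNReal.ofReal p * ∫⁻ t in Set.Ioi (0 : ℝ),
          μ {a | f a = ∞} * ENNReal.ofReal (t ^ (p - 1)) := by
          rw [lintegral_const_mul _ (by fun_prop), hdiv, ENNReal.mul_top htop,
            ENNReal.mul_top (by simpa using hp)]
      _ ≤ _ := by
          gcongr with t a
          exact fun ha => ha ▸ ENNReal.ofReal_lt_top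

theorem ofReal_rpow_eq_ofReal_mul {t : ℝ} (ht : 0 < t) (q : ℝ) :
    ENNReal.ofReal (t ^ q) = ENNReal.ofReal t * ENNReal.ofReal (t ^ (q - 1)) := by
  rw [← ENNReal.ofReal_mul ht.le, Real.rpow_sub_one ht.ne', mul_div_cancel₀ _ ht.ne']

theorem lintegral_rpow_le_of_mul_meas_lt_le (hf : AEMeasurable f μ) (hg : AEMeasurable g μ)
    (hp : 1 < p)
    (h : ∀ t ≠ ∞, t * μ {a | t < f a} ≤ ∫⁻ a in {a | t < g a}, g a ∂μ) :
    ∫⁻ a, f a ^ p ∂μ ≤ ENNReal.ofReal (p / (p - 1)) * ∫⁻ a, g a ^ p ∂μ := by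
  have hp' : 0 < p - 1 := sub_pos.2 hp
  have hdens : ∫⁻ a, g a ^ (p - 1) ∂(μ.withDensity g) = ∫⁻ a, g a ^ p ∂μ := by
    rw [lintegral_withDensity_eq_lintegral_mul₀ hg (hg.pow_const _)]
    refine lintegral_congr fun a => ?_
    nth_rw 1 [Pi.mul_apply, ← ENNReal.rpow_one (g a)]
    rw [← ENNReal.rpow_add_of_nonneg _ _ zero_le_one hp'.le, add_sub_cancel]
  calc ∫⁻ a, f a ^ p ∂μ
      = ENNReal.ofReal p * ∫⁻ t in Set.Ioi (0 : ℝ),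
          μ {a | ENNReal.ofReal t < f a} * ENNReal.ofReal (t ^ (p - 1)) :=
        lintegral_rpow_eq_lintegral_Ioi_meas_lt hf (by linarith)
    _ ≤ ENNReal.ofReal p * ∫⁻ t in Set.Ioi (0 : ℝ),
          μ.withDensity g {a | ENNReal.ofReal t < g a} * ENNReal.ofReal (t ^ (p - 1 - 1)) := by
        refine mul_le_mul_right (setLIntegral_mono' measurableSet_Ioi fun t ht => ?_) _
        rw [ofReal_rpow_eq_ofReal_mul ht, ← mul_assoc, mul_comm (μ _)]
        gcongr
        exact (h _ ENNReal.ofReal_ne_top).trans (withDensity_apply_le _ _)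
    _ = ENNReal.ofReal (p / (p - 1)) * ∫⁻ a, g a ^ p ∂μ := by
        rw [← hdens, lintegral_rpow_eq_lintegral_Ioi_meas_lt
          (hg.mono_ac (withDensity_absolutelyContinuous μ g)) hp', ← mul_assoc,
          ← ENNReal.ofReal_mul (by positivity), div_mul_cancel₀ _ hp'.ne']

theorem antitone_meas_ofReal_lt (μ : Measure α) (f : α → ℝ≥0∞) :
    Antitone fun t : ℝ => μ {a | ENNReal.ofReal t < f a} := fun _ _ hst =>
  measure_mono fun _ ha => (ENNReal.ofReal_le_ofReal hst).trans_lt ha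

theorem lintegral_rpow_le_of_meas_lt_le_add {C l : ℝ≥0∞}
    (hf : AEMeasurable f ν) (hg : AEMeasurable g μ) (hδ : 0 < δ)
    (h : ∀ t ≠ ∞, ν {a | t < f a} ≤ ν {_a | t < l} + C * t * μ {a | t < g a}) :
    ∫⁻ a, f a ^ δ ∂ν ≤ l ^ δ * ν Set.univ + C * ENNReal.ofReal δ * ∫⁻ a, g a ^ (1 + δ) ∂μ := by
  have hl : l ^ δ * ν Set.univ = ENNReal.ofReal δ * ∫⁻ t in Set.Ioi (0 : ℝ),
      ν {_a | ENNReal.ofReal t < l} * ENNReal.ofReal (t ^ (δ - 1)) := by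
    rw [← lintegral_const, lintegral_rpow_eq_lintegral_Ioi_meas_lt aemeasurable_const hδ]
  have hg' : ENNReal.ofReal δ * ∫⁻ t in Set.Ioi (0 : ℝ),
      μ {a | ENNReal.ofReal t < g a} * ENNReal.ofReal (t ^ δ) ≤
      ENNReal.ofReal δ * ∫⁻ a, g a ^ (1 + δ) ∂μ := by
    rw [lintegral_rpow_eq_lintegral_Ioi_meas_lt hg (by positivity : 0 < 1 + δ),
      add_sub_cancel_left]
    gcongr
    exact le_mul_of_one_le_left' (by rw [ENNReal.one_le_ofReal]; linarith)
  calc ∫⁻ a, f a ^ δ ∂ν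
      = ENNReal.ofReal δ * ∫⁻ t in Set.Ioi (0 : ℝ),
          ν {a | ENNReal.ofReal t < f a} * ENNReal.ofReal (t ^ (δ - 1)) :=
        lintegral_rpow_eq_lintegral_Ioi_meas_lt hf hδ
    _ ≤ ENNReal.ofReal δ * ∫⁻ t in Set.Ioi (0 : ℝ),
          (ν {_a | ENNReal.ofReal t < l} * ENNReal.ofReal (t ^ (δ - 1)) +
            C * (μ {a | ENNReal.ofReal t < g a} * ENNReal.ofReal (t ^ δ))) := by
        refine mul_le_mul_right (setLIntegral_mono' measurableSet_Ioi fun t ht => ?_) _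
        refine (mul_le_mul_left (h _ ENNReal.ofReal_ne_top) _).trans_eq ?_
        rw [ofReal_rpow_eq_ofReal_mul ht δ]
        ring
    _ = l ^ δ * ν Set.univ + C * (ENNReal.ofReal δ * ∫⁻ t in Set.Ioi (0 : ℝ),
          μ {a | ENNReal.ofReal t < g a} * ENNReal.ofReal (t ^ δ)) := by
        have hmeas (κ : Measure α) (k : α → ℝ≥0∞) (q : ℝ) :
            Measurable fun t : ℝ => κ {a | ENNReal.ofReal t < k a} * ENNReal.ofReal (t ^ q) :=
          (antitone_meas_ofReal_lt κ k).measurable.mul (by fun_prop)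
        rw [lintegral_add_left (hmeas ν (fun _ => l) (δ - 1)), lintegral_const_mul _ (hmeas μ g δ),
          mul_add, hl, mul_left_comm]
    _ ≤ l ^ δ * ν Set.univ + C * ENNReal.ofReal δ * ∫⁻ a, g a ^ (1 + δ) ∂μ := by
        rw [mul_assoc]
        gcongr

theorem withDensity_meas_lt_min_le {B C l : ℝ≥0∞} (hB : 1 ≤ B)
    (h : ∀ t ≠ ∞, l ≤ t → μ.withDensity w {a | t < w a} ≤ C * t * μ {a | t < B * w a})
    (N : ℝ≥0∞) {t : ℝ≥0∞} (ht : t ≠ ∞) :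
    μ.withDensity w {a | t < min (w a) N} ≤
      μ.withDensity w {_a | t < l} + C * t * μ {a | t < B * min (w a) N} := by
  rcases lt_or_ge t l with htl | hlt
  · exact le_add_right (measure_mono fun a _ => htl)
  rcases lt_or_ge t N with htN | hNt
  · refine le_add_left (le_trans (measure_mono fun a ha => ?_) ((h t ht hlt).trans ?_))
    · exact (lt_min_iff.1 (Set.mem_ofPred.1 ha)).1
    · refine mul_le_mul_right (measure_mono fun a ha => ?_) _
      rw [Set.mem_ofPred_eq, mul_min]
      exact lt_min ha (htN.trans_le (le_mul_of_one_le_left' hB))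
  · exact (measure_mono_null (t := ∅) (fun a ha => (lt_min_iff.1 ha).2.not_ge hNt)
      measure_empty).trans_le zero_le

theorem lintegral_min_rpow_le_of_meas_lt_le {B C l : ℝ≥0∞} (hw : AEMeasurable w μ)
    (hfin : ∫⁻ a, w a ∂μ ≠ ∞) (hB : 1 ≤ B) (hδ : 0 < δ)
    (h : ∀ t ≠ ∞, l ≤ t → μ.withDensity w {a | t < w a} ≤ C * t * μ {a | t < B * w a})
    (hsmall : 2 * (C * ENNReal.ofReal δ * B ^ (1 + δ)) ≤ 1) (N : ℕ) :
    ∫⁻ a, min (w a) N ^ (1 + δ) ∂μ ≤ 2 * (l ^ δ * ∫⁻ a, w a ∂μ) := by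
  have htotal : μ.withDensity w Set.univ = ∫⁻ a, w a ∂μ := by
    rw [withDensity_apply _ MeasurableSet.univ, Measure.restrict_univ]
  have hweight : ∫⁻ a, min (w a) N ^ (1 + δ) ∂μ ≤
      ∫⁻ a, min (w a) N ^ δ ∂(μ.withDensity w) := by
    rw [lintegral_withDensity_eq_lintegral_mul₀ hw (by fun_prop)]
    refine lintegral_mono fun a => ?_
    rw [ENNReal.rpow_add_of_nonneg _ _ zero_le_one hδ.le, ENNReal.rpow_one]
    exact mul_le_mul_left (min_le_left _ _) _
  have hfinite : ∫⁻ a, min (w a) N ^ (1 + δ) ∂μ ≠ ∞ := by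
    refine ne_top_of_le_ne_top (ENNReal.mul_ne_top (ENNReal.rpow_ne_top_of_nonneg hδ.le
      (ENNReal.natCast_ne_top N)) hfin) (hweight.trans ?_)
    rw [← htotal, ← lintegral_const]
    exact lintegral_mono fun a => ENNReal.rpow_le_rpow (min_le_right _ _) hδ.le
  set m := ∫⁻ a, min (w a) N ^ (1 + δ) ∂μ
  have habsorb : 2 * m ≤ 2 * (l ^ δ * ∫⁻ a, w a ∂μ) + m := by
    calc 2 * m ≤ 2 * (l ^ δ * μ.withDensity w Set.univ +
          C * ENNReal.ofReal δ * ∫⁻ a, (B * min (w a) N) ^ (1 + δ) ∂μ) := by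
          gcongr
          exact hweight.trans (lintegral_rpow_le_of_meas_lt_le_add
            ((hw.min aemeasurable_const).mono_ac (withDensity_absolutelyContinuous μ w))
            ((hw.min aemeasurable_const).const_mul B) hδ
            fun t => withDensity_meas_lt_min_le hB h N)
      _ = 2 * (l ^ δ * ∫⁻ a, w a ∂μ) + 2 * (C * ENNReal.ofReal δ * B ^ (1 + δ)) * m := by
          simp_rw [ENNReal.mul_rpow_of_nonneg _ _ (by positivity : 0 ≤ 1 + δ)]
          rw [lintegral_const_mul'' _ (by fun_prop), htotal]
          ring
      _ ≤ 2 * (l ^ δ * ∫⁻ a, w a ∂μ) + m := by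
          gcongr
          exact mul_le_of_le_one_left' hsmall
  rw [two_mul] at habsorb
  exact ENNReal.le_of_add_le_add_right hfinite habsorb

theorem lintegral_rpow_one_add_le_of_meas_lt_le {B C l : ℝ≥0∞} (hw : AEMeasurable w μ)
    (hfin : ∫⁻ a, w a ∂μ ≠ ∞) (hB : 1 ≤ B) (hδ : 0 < δ)
    (h : ∀ t ≠ ∞, l ≤ t → μ.withDensity w {a | t < w a} ≤ C * t * μ {a | t < B * w a})
    (hsmall : 2 * (C * ENNReal.ofReal δ * B ^ (1 + δ)) ≤ 1) :
    ∫⁻ a, w a ^ (1 + δ) ∂μ ≤ 2 * (l ^ δ * ∫⁻ a, w a ∂μ) := by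
  have hmono : ∀ a, Monotone fun N : ℕ => min (w a) N ^ (1 + δ) := fun a M N hMN =>
    ENNReal.rpow_le_rpow (min_le_min_left _ (by exact_mod_cast hMN)) (by positivity)
  have hlim : ∀ a, Filter.Tendsto (fun N : ℕ => min (w a) N ^ (1 + δ)) Filter.atTop
      (nhds (w a ^ (1 + δ))) := fun a => by
    have := (tendsto_const_nhds (x := w a)).min ENNReal.tendsto_nat_nhds_top
    rw [min_top_right] at this
    exact (ENNReal.continuous_rpow_const.tendsto _).comp this
  exact le_of_tendsto' (lintegral_tendsto_of_tendsto_of_monotone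
      (fun N => (hw.min aemeasurable_const).pow_const _) (ae_of_all _ hmono) (ae_of_all _ hlim))
    (lintegral_min_rpow_le_of_meas_lt_le hw hfin hB hδ h hsmall)

end LayerCake

section DyadicCubes

variable {d : ℕ} {I J : ℤ × (Fin d → ℤ)} {T : Set (ℤ × (Fin d → ℤ))} {x y : Fin d → ℝ}

/-- The index of the dyadic cube of generation `k` containing `x`; see `mem_dCube_iff`. -/
noncomputable def dyadicIndex (k : ℤ) (x : Fin d → ℝ) : ℤ × (Fin d → ℤ) :=
  (k, fun i => ⌊x i * (2 : ℝ) ^ k⌋)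

theorem mem_dCube_iff : x ∈ dCube d I ↔ dyadicIndex I.1 x = I := by
  have hpos : (0 : ℝ) < 2 ^ I.1 := by positivity
  simp only [dCube, dyadicIndex, Set.mem_univ_pi, Set.mem_Ico, Prod.ext_iff, true_and, funext_iff,
    Int.floor_eq_iff, _root_.zpow_neg, ← div_eq_mul_inv, div_le_iff₀ hpos, lt_div_iff₀ hpos]

theorem mem_dCube_dyadicIndex (k : ℤ) (x : Fin d → ℝ) : x ∈ dCube d (dyadicIndex k x) :=
  mem_dCube_iff.2 rfl

theorem dyadicIndex_eq_of_le {k l : ℤ} (hkl : k ≤ l) (h : dyadicIndex l x = dyadicIndex l y) :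
    dyadicIndex k x = dyadicIndex k y := by
  obtain ⟨j, rfl⟩ := Int.le.dest hkl
  have hscale (t : ℝ) : t * 2 ^ k = t * 2 ^ (k + j) / (2 ^ j : ℕ) := by
    rw [zpow_add₀ two_ne_zero, Nat.cast_pow, Nat.cast_two, zpow_natCast]
    field_simp
  simp only [dyadicIndex, Prod.mk.injEq, true_and, funext_iff] at h ⊢
  intro i
  rw [hscale, hscale, Int.floor_div_natCast, Int.floor_div_natCast, h i]

theorem dCube_subset_dCube (hx : x ∈ dCube d I) (hx' : x ∈ dCube d J) (hgen : J.1 ≤ I.1) :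
    dCube d I ⊆ dCube d J := fun y hy => by
  rw [mem_dCube_iff] at *
  exact (dyadicIndex_eq_of_le hgen (hy.trans hx.symm)).trans hx'

theorem measurableSet_dCube (I : ℤ × (Fin d → ℤ)) : MeasurableSet (dCube d I) :=
  MeasurableSet.univ_pi fun _ => measurableSet_Ico

theorem volume_dCube (I : ℤ × (Fin d → ℤ)) :
    volume (dCube d I) = ENNReal.ofReal ((2 : ℝ) ^ (-I.1)) ^ d := by
  simp [dCube, Real.volume_pi_Ico, add_mul]

theorem volume_dCube_ne_zero (I : ℤ × (Fin d → ℤ)) : volume (dCube d I) ≠ 0 := by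
  rw [volume_dCube]
  exact pow_ne_zero _ (ENNReal.ofReal_ne_zero_iff.2 (by positivity))

theorem volume_dCube_ne_top (I : ℤ × (Fin d → ℤ)) : volume (dCube d I) ≠ ∞ := by
  rw [volume_dCube]
  exact ENNReal.pow_ne_top ENNReal.ofReal_ne_top

theorem volume_dCube_parent (k : ℤ) (x : Fin d → ℝ) :
    volume (dCube d (dyadicIndex (k - 1) x)) = 2 ^ d * volume (dCube d (dyadicIndex k x)) := by
  simp only [volume_dCube, dyadicIndex]
  rw [neg_sub, sub_eq_neg_add, zpow_add₀ two_ne_zero, mul_comm, ENNReal.ofReal_mul (by norm_num),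
    mul_pow]
  simp

/-- The maximal cubes of a family of dyadic cubes. Maximality is measured by the generation rather
than by inclusion: in dimension `0` all dyadic cubes coincide as sets. -/
def maximalCubes (T : Set (ℤ × (Fin d → ℤ))) : Set (ℤ × (Fin d → ℤ)) :=
  {J ∈ T | ∀ J' ∈ T, dCube d J ⊆ dCube d J' → J.1 ≤ J'.1}

theorem pairwiseDisjoint_maximalCubes (T : Set (ℤ × (Fin d → ℤ))) :
    (maximalCubes T).PairwiseDisjoint (dCube d) := by
  have hle {I J} (hI : I ∈ maximalCubes T) (hJ : J ∈ maximalCubes T) {x} (hx : x ∈ dCube d I)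
      (hx' : x ∈ dCube d J) : I.1 ≤ J.1 := by
    by_contra! hlt
    exact hlt.not_ge (hI.2 J hJ.1 (dCube_subset_dCube hx hx' hlt.le))
  refine fun I hI J hJ hne => Set.disjoint_left.2 fun x hx hx' => hne ?_
  rw [← mem_dCube_iff.1 hx, ← mem_dCube_iff.1 hx', (hle hI hJ hx hx').antisymm (hle hJ hI hx' hx)]

theorem exists_mem_maximalCubes {k : ℤ} (hT : ∀ J ∈ T, k ≤ J.1) (hJ : J ∈ T) :
    ∃ J' ∈ maximalCubes T, dCube d J ⊆ dCube d J' := by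
  obtain ⟨_, ⟨J', hJ', hJJ', rfl⟩, hleast⟩ := Int.exists_least_of_bdd
    (P := fun l => ∃ J' ∈ T, dCube d J ⊆ dCube d J' ∧ J'.1 = l)
    ⟨k, by rintro _ ⟨J', hJ', -, rfl⟩; exact hT J' hJ'⟩ ⟨J.1, J, hJ, subset_rfl, rfl⟩
  exact ⟨J', ⟨hJ', fun K hK hKJ' => hleast _ ⟨K, hK, hJJ'.trans hKJ', rfl⟩⟩, hJJ'⟩

theorem biUnion_maximalCubes {k : ℤ} (hT : ∀ J ∈ T, k ≤ J.1) :
    ⋃ J ∈ maximalCubes T, dCube d J = ⋃ J ∈ T, dCube d J := by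
  refine (Set.biUnion_mono (fun J hJ => hJ.1) fun _ _ => subset_rfl).antisymm
    (Set.iUnion₂_subset fun J hJ => ?_)
  obtain ⟨J', hJ', hsub⟩ := exists_mem_maximalCubes hT hJ
  exact hsub.trans (Set.subset_biUnion_of_mem (u := dCube d) hJ')

variable {μ ν : Measure (Fin d → ℝ)}

theorem measure_biUnion_dCube_le_of_maximalCubes {k : ℤ} (hT : ∀ J ∈ T, k ≤ J.1)
    (h : ∀ J ∈ maximalCubes T, μ (dCube d J) ≤ ν (dCube d J)) :
    μ (⋃ J ∈ T, dCube d J) ≤ ν (⋃ J ∈ T, dCube d J) := by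
  rw [← biUnion_maximalCubes hT,
    measure_biUnion (Set.to_countable _) (pairwiseDisjoint_maximalCubes T)
      fun J _ => measurableSet_dCube J,
    measure_biUnion (Set.to_countable _) (pairwiseDisjoint_maximalCubes T)
      fun J _ => measurableSet_dCube J]
  exact ENNReal.tsum_le_tsum fun J => h J J.2

theorem measure_biUnion_dCube_le (h : ∀ J ∈ T, μ (dCube d J) ≤ ν (dCube d J)) :
    μ (⋃ J ∈ T, dCube d J) ≤ ν (⋃ J ∈ T, dCube d J) := by
  let S (k : ℕ) : Set (ℤ × (Fin d → ℤ)) := {J ∈ T | -(k : ℤ) ≤ J.1}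
  have hS : ⋃ k, S k = T := by
    ext J
    simp only [S, Set.mem_iUnion, Set.mem_ofPred_eq, exists_and_left, and_iff_left_iff_imp]
    exact fun _ => ⟨(-J.1).toNat, by omega⟩
  have hunion : ⋃ J ∈ T, dCube d J = ⋃ k, ⋃ J ∈ S k, dCube d J := by
    rw [← Set.biUnion_iUnion, hS]
  have hmono : Monotone fun k => ⋃ J ∈ S k, dCube d J := fun k l hkl =>
    Set.biUnion_mono (fun J hJ => ⟨hJ.1, by have := hJ.2; omega⟩) fun _ _ => subset_rfl
  rw [hunion, hmono.measure_iUnion, hmono.measure_iUnion]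
  exact iSup_mono fun k => measure_biUnion_dCube_le_of_maximalCubes (fun J hJ => hJ.2)
    fun J hJ => h J hJ.1.1

end DyadicCubes

section MaximalFunction

variable {d : ℕ} {I : ℤ × (Fin d → ℤ)} {x : Fin d → ℝ}

theorem inv_volume_mul_setLIntegral_dCube (I : ℤ × (Fin d → ℤ)) (g : (Fin d → ℝ) → ℝ≥0∞) :
    (volume (dCube d I))⁻¹ * ∫⁻ y in dCube d I, g y = ⨍⁻ y in dCube d I, g y ∂volume := by
  rw [setLAverage_eq, ENNReal.div_eq_inv_mul]

theorem dyadicMax_eq_iSup_setLAverage (g : (Fin d → ℝ) → ℝ≥0∞) (x : Fin d → ℝ) :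
    dyadicMax g x =
      ⨆ (I : ℤ × (Fin d → ℤ)) (_ : x ∈ dCube d I), ⨍⁻ y in dCube d I, g y ∂volume := by
  simp only [dyadicMax, inv_volume_mul_setLIntegral_dCube]

theorem setLAverage_le_dyadicMax (g : (Fin d → ℝ) → ℝ≥0∞) (hx : x ∈ dCube d I) :
    ⨍⁻ y in dCube d I, g y ∂volume ≤ dyadicMax g x := by
  rw [dyadicMax_eq_iSup_setLAverage]
  exact le_iSup₂ (f := fun I (_ : x ∈ dCube d I) => ⨍⁻ y in dCube d I, g y ∂volume) I hx

theorem superlevel_dyadicMax_eq_biUnion (g : (Fin d → ℝ) → ℝ≥0∞) (t : ℝ≥0∞) :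
    {x | t < dyadicMax g x} =
      ⋃ J ∈ {J : ℤ × (Fin d → ℤ) | t < ⨍⁻ y in dCube d J, g y ∂volume}, dCube d J := by
  ext x
  simp only [dyadicMax_eq_iSup_setLAverage, Set.mem_ofPred_eq, lt_iSup_iff, Set.mem_iUnion]
  exact exists_congr fun _ => by rw [exists_prop, exists_prop, and_comm]

theorem measurable_dyadicMax (g : (Fin d → ℝ) → ℝ≥0∞) : Measurable (dyadicMax g) :=
  measurable_of_Ioi fun t => by
    change MeasurableSet {x | t < dyadicMax g x}
    rw [superlevel_dyadicMax_eq_biUnion]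
    exact .biUnion (Set.to_countable _) fun J _ => measurableSet_dCube J

theorem mul_volume_lt_dyadicMax_le (g : (Fin d → ℝ) → ℝ≥0∞) (t : ℝ≥0∞) :
    t * volume {x | t < dyadicMax g x} ≤ ∫⁻ x, g x := by
  have hcube (J : ℤ × (Fin d → ℤ)) (hJ : t < ⨍⁻ y in dCube d J, g y ∂volume) :
      (t • volume) (dCube d J) ≤ volume.withDensity g (dCube d J) := by
    rw [withDensity_apply' _ _, ← measure_mul_setLAverage g (volume_dCube_ne_top J), mul_comm,
      Measure.smul_apply, smul_eq_mul]
    gcongr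
  calc t * volume {x | t < dyadicMax g x}
      ≤ volume.withDensity g {x | t < dyadicMax g x} := by
        rw [superlevel_dyadicMax_eq_biUnion]
        exact measure_biUnion_dCube_le (μ := t • volume) hcube
    _ ≤ volume.withDensity g Set.univ := measure_mono (Set.subset_univ _)
    _ = ∫⁻ x, g x := by rw [withDensity_apply _ .univ, Measure.restrict_univ]

theorem dyadicMax_le_dyadicMax_indicator_add (g : (Fin d → ℝ) → ℝ≥0∞) (t : ℝ≥0∞)
    (x : Fin d → ℝ) :
    dyadicMax g x ≤ dyadicMax ({y | t < g y}.indicator g) x + t := by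
  conv_lhs => rw [dyadicMax_eq_iSup_setLAverage]
  refine iSup₂_le fun I hI => ?_
  calc ⨍⁻ y in dCube d I, g y ∂volume
      ≤ ⨍⁻ y in dCube d I, ({y | t < g y}.indicator g y + t) ∂volume := by
        refine setLAverage_mono_ae _ (ae_of_all _ fun y => ?_)
        by_cases hy : t < g y
        · have hmem : y ∈ {y | t < g y} := hy
          exact (Set.indicator_of_mem hmem g).ge.trans le_self_add
        · exact (not_lt.1 hy).trans le_add_self
    _ = (⨍⁻ y in dCube d I, {y | t < g y}.indicator g y ∂volume) + t := by
        rw [laverage_eq', lintegral_add_right _ measurable_const, ← laverage_eq', ← laverage_eq',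
          setLAverage_const (volume_dCube_ne_zero I) (volume_dCube_ne_top I)]
    _ ≤ dyadicMax ({y | t < g y}.indicator g) x + t := by
        gcongr
        exact setLAverage_le_dyadicMax _ hI

theorem mul_volume_two_mul_lt_dyadicMax_le {g : (Fin d → ℝ) → ℝ≥0∞} (hg : AEMeasurable g)
    (t : ℝ≥0∞) :
    t * volume {x | 2 * t < dyadicMax g x} ≤ ∫⁻ y in {y | t < g y}, g y := by
  rw [← lintegral_indicator₀ (nullMeasurableSet_lt aemeasurable_const hg)]
  refine le_trans ?_ (mul_volume_lt_dyadicMax_le _ t)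
  refine mul_le_mul_right (measure_mono fun x hx => ?_) t
  have := (Set.mem_ofPred.1 hx).trans_le (dyadicMax_le_dyadicMax_indicator_add g t x)
  rw [two_mul] at this
  exact lt_of_add_lt_add_right this

theorem lintegral_dyadicMax_rpow_le {g : (Fin d → ℝ) → ℝ≥0∞} (hg : AEMeasurable g) {p : ℝ}
    (hp : 1 < p) :
    ∫⁻ x, dyadicMax g x ^ p ≤ ENNReal.ofReal (2 ^ p * (p / (p - 1))) * ∫⁻ x, g x ^ p := by
  have hhalf : ∫⁻ x, (dyadicMax g x / 2) ^ p ≤ ENNReal.ofReal (p / (p - 1)) * ∫⁻ x, g x ^ p :=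
    lintegral_rpow_le_of_mul_meas_lt_le ((measurable_dyadicMax g).div_const 2).aemeasurable hg hp
      fun t _ => by
        simpa only [ENNReal.lt_div_iff_mul_lt (Or.inl two_ne_zero) (Or.inl ENNReal.ofNat_ne_top),
          mul_comm t 2] using mul_volume_two_mul_lt_dyadicMax_le hg t
  calc ∫⁻ x, dyadicMax g x ^ p
      = ENNReal.ofReal (2 ^ p) * ∫⁻ x, (dyadicMax g x / 2) ^ p := by
        rw [← lintegral_const_mul' _ _ ENNReal.ofReal_ne_top]
        refine lintegral_congr fun x => ?_
        rw [← ENNReal.ofReal_rpow_of_pos two_pos, ENNReal.ofReal_ofNat,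
          ← ENNReal.mul_rpow_of_nonneg _ _ (by positivity),
          ENNReal.mul_div_cancel two_ne_zero ENNReal.ofNat_ne_top]
    _ ≤ ENNReal.ofReal (2 ^ p) * (ENNReal.ofReal (p / (p - 1)) * ∫⁻ x, g x ^ p) := by gcongr
    _ = ENNReal.ofReal (2 ^ p * (p / (p - 1))) * ∫⁻ x, g x ^ p := by
        rw [← mul_assoc, ← ENNReal.ofReal_mul (by positivity)]

end MaximalFunction

section LebesgueDifferentiation

variable {d : ℕ}

/-- The centre of a dyadic cube, used to view the cube as a ball for the sup norm. -/
noncomputable def dCubeCenter (I : ℤ × (Fin d → ℤ)) : Fin d → ℝ :=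
  fun i => ((I.2 i : ℝ) + 1 / 2) * (2 : ℝ) ^ (-I.1)

theorem closedBall_dCubeCenter (I : ℤ × (Fin d → ℤ)) :
    Metric.closedBall (dCubeCenter I) ((2 : ℝ) ^ (-I.1) / 2) =
      Set.Icc (fun i => (I.2 i : ℝ) * (2 : ℝ) ^ (-I.1))
        (fun i => ((I.2 i : ℝ) + 1) * (2 : ℝ) ^ (-I.1)) := by
  rw [closedBall_pi _ (by positivity), ← Set.pi_univ_Icc]
  congr! 2 with i
  rw [Real.closedBall_eq_Icc, dCubeCenter]
  ring_nf

theorem dCube_subset_closedBall (I : ℤ × (Fin d → ℤ)) :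
    dCube d I ⊆ Metric.closedBall (dCubeCenter I) ((2 : ℝ) ^ (-I.1) / 2) := by
  rw [closedBall_dCubeCenter, ← Set.pi_univ_Icc]
  exact Set.pi_mono fun _ _ => Set.Ico_subset_Icc_self

theorem dCube_ae_eq_closedBall (I : ℤ × (Fin d → ℤ)) :
    dCube d I =ᵐ[volume] Metric.closedBall (dCubeCenter I) ((2 : ℝ) ^ (-I.1) / 2) := by
  rw [closedBall_dCubeCenter]
  exact Measure.univ_pi_Ico_ae_eq_Icc

theorem ae_tendsto_setLAverage_dyadicIndex {g : (Fin d → ℝ) → ℝ≥0∞} (hg : AEMeasurable g)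
    (hfin : ∫⁻ x, g x ≠ ∞) :
    ∀ᵐ x, Filter.Tendsto (fun k : ℕ => ⨍⁻ y in dCube d (dyadicIndex k x), g y ∂volume)
      Filter.atTop (nhds (g x)) := by
  have hradius : Filter.Tendsto (fun k : ℕ => (2 : ℝ) ^ (-(k : ℤ)) / 2) Filter.atTop
      (nhdsWithin 0 (Set.Ioi 0)) := by
    refine tendsto_nhdsWithin_iff.2 ⟨?_, .of_forall fun k => Set.mem_Ioi.2 (by positivity)⟩
    simpa [← inv_pow] using (tendsto_pow_atTop_nhds_zero_of_lt_one (r := (2⁻¹ : ℝ)) (by norm_num)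
      (by norm_num)).div_const 2
  filter_upwards [(IsUnifLocDoublingMeasure.vitaliFamily volume 1).ae_tendsto_lintegral_div hg hfin]
    with x hx
  have hballs := IsUnifLocDoublingMeasure.tendsto_closedBall_filterAt (x := x) volume (K := 1)
    (fun k : ℕ => dCubeCenter (dyadicIndex k x)) _ hradius <| .of_forall fun k => by
      rw [one_mul]
      exact dCube_subset_closedBall _ (mem_dCube_dyadicIndex k x)
  refine (hx.comp hballs).congr fun k => ?_
  rw [Function.comp_apply, ← setLAverage_eq]
  exact (setLAverage_congr (dCube_ae_eq_closedBall (dyadicIndex k x))).symm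

end LebesgueDifferentiation

section ReverseHolder

variable {d : ℕ} {I J : ℤ × (Fin d → ℤ)} {w : (Fin d → ℝ) → ℝ≥0∞} {B t : ℝ≥0∞} {δ : ℝ}

/-- The dyadic `A_∞` condition in median form: on each dyadic cube the weight exceeds `B⁻¹` times
its average on at least half of the cube. -/
def IsDyadicAInfty (w : (Fin d → ℝ) → ℝ≥0∞) (B : ℝ≥0∞) : Prop :=
  ∀ J : ℤ × (Fin d → ℤ), volume (dCube d J) ≤
    2 * volume {y ∈ dCube d J | ⨍⁻ z in dCube d J, w z ∂volume ≤ B * w y}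

/-- The dyadic subcubes of `dCube d I` on which the average of `w` exceeds `t`; the maximal ones
are the stopping cubes of the Calderón–Zygmund decomposition of `w` at height `t`. -/
def heavySubcubes (w : (Fin d → ℝ) → ℝ≥0∞) (I : ℤ × (Fin d → ℤ)) (t : ℝ≥0∞) :
    Set (ℤ × (Fin d → ℤ)) :=
  {J | I.1 ≤ J.1 ∧ dCube d J ⊆ dCube d I ∧ t < ⨍⁻ y in dCube d J, w y ∂volume}

theorem ae_mem_biUnion_heavySubcubes (hw : AEMeasurable w)
    (hfin : ∫⁻ y in dCube d I, w y ≠ ∞) (t : ℝ≥0∞) :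
    ∀ᵐ x ∂volume.restrict (dCube d I), t < w x →
      x ∈ ⋃ J ∈ heavySubcubes w I t, dCube d J := by
  rw [ae_restrict_iff' (measurableSet_dCube I)]
  filter_upwards [ae_tendsto_setLAverage_dyadicIndex (hw.indicator (measurableSet_dCube I))
    (by rwa [lintegral_indicator (measurableSet_dCube I)])] with x hlim hxI hxt
  rw [Set.indicator_of_mem hxI] at hlim
  obtain ⟨k, hk, hkI⟩ := ((hlim.eventually_const_lt hxt).and
    (Filter.eventually_ge_atTop I.1.toNat)).exists
  have hgen : I.1 ≤ k := Int.toNat_le.1 hkI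
  have hsub : dCube d (dyadicIndex k x) ⊆ dCube d I :=
    dCube_subset_dCube (mem_dCube_dyadicIndex k x) hxI hgen
  refine Set.mem_biUnion (x := dyadicIndex k x) ⟨hgen, hsub, ?_⟩ (mem_dCube_dyadicIndex k x)
  rwa [setLAverage_congr_fun (measurableSet_dCube _) fun y hy => Set.indicator_of_mem (hsub hy) w]
    at hk

-- The parent of a stopping cube is not heavy, so the average over the cube itself is `≤ 2 ^ d * t`.
theorem setLIntegral_le_of_mem_maximalCubes (hI : ⨍⁻ y in dCube d I, w y ∂volume ≤ t)
    (hJ : J ∈ maximalCubes (heavySubcubes w I t)) :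
    ∫⁻ y in dCube d J, w y ≤ 2 ^ d * t * volume (dCube d J) := by
  obtain ⟨⟨hIJ, hsub, havg⟩, hmax⟩ := hJ
  obtain ⟨x, hx⟩ := nonempty_of_measure_ne_zero (volume_dCube_ne_zero J)
  have hxJ := mem_dCube_iff.1 hx
  have hlt : I.1 < J.1 := by
    refine hIJ.lt_of_ne fun heq => havg.not_ge ?_
    rwa [← hxJ, ← heq, mem_dCube_iff.1 (hsub hx)]
  have hxP : x ∈ dCube d (dyadicIndex (J.1 - 1) x) := mem_dCube_dyadicIndex _ x
  have hJP : dCube d J ⊆ dCube d (dyadicIndex (J.1 - 1) x) :=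
    dCube_subset_dCube hx hxP (sub_one_lt J.1).le
  have hP : ⨍⁻ y in dCube d (dyadicIndex (J.1 - 1) x), w y ∂volume ≤ t := by
    by_contra! hPt
    have hgen : I.1 ≤ J.1 - 1 := Int.le_sub_one_of_lt hlt
    exact (sub_one_lt J.1).not_ge
      (hmax _ ⟨hgen, dCube_subset_dCube hxP (hsub hx) hgen, hPt⟩ hJP)
  calc ∫⁻ y in dCube d J, w y ≤ ∫⁻ y in dCube d (dyadicIndex (J.1 - 1) x), w y :=
        lintegral_mono_set hJP
    _ ≤ volume (dCube d (dyadicIndex (J.1 - 1) x)) * t := by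
        rw [← measure_mul_setLAverage w (volume_dCube_ne_top _)]
        gcongr
    _ = 2 ^ d * t * volume (dCube d J) := by
        rw [volume_dCube_parent, hxJ, mul_right_comm]

theorem IsDyadicAInfty.withDensity_lt_le (h : IsDyadicAInfty w B) (hw : AEMeasurable w)
    (hfin : ∫⁻ y in dCube d I, w y ≠ ∞) (hI : ⨍⁻ y in dCube d I, w y ∂volume ≤ t) :
    (volume.restrict (dCube d I)).withDensity w {y | t < w y} ≤
      2 ^ (d + 1) * t * volume.restrict (dCube d I) {y | t < B * w y} := by
  set μ := volume.restrict (dCube d I)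
  set T := heavySubcubes w I t
  set ν := (2 ^ (d + 1) * t) • μ.restrict {y | t < B * w y}
  have hcube : ∀ J ∈ maximalCubes T, μ.withDensity w (dCube d J) ≤ ν (dCube d J) := fun J hJ => by
    have hsub : dCube d J ⊆ dCube d I := hJ.1.2.1
    calc μ.withDensity w (dCube d J) = ∫⁻ y in dCube d J, w y := by
          rw [withDensity_apply _ (measurableSet_dCube J), Measure.restrict_restrict_of_subset hsub]
      _ ≤ 2 ^ d * t * volume (dCube d J) := setLIntegral_le_of_mem_maximalCubes hI hJ
      _ ≤ 2 ^ d * t * (2 * volume (dCube d J ∩ {y | t < B * w y})) := by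
          refine mul_le_mul_right ((h J).trans (mul_le_mul_right (measure_mono ?_) 2)) _
          exact fun y hy => ⟨hy.1, hJ.1.2.2.trans_le hy.2⟩
      _ = ν (dCube d J) := by
          rw [Measure.smul_apply, smul_eq_mul, Measure.restrict_apply (measurableSet_dCube J),
            Measure.restrict_eq_self _ (Set.inter_subset_left.trans hsub)]
          ring
  calc μ.withDensity w {y | t < w y} ≤ μ.withDensity w (⋃ J ∈ T, dCube d J) :=
        measure_mono_ae ((withDensity_absolutelyContinuous μ w).ae_le
          (ae_mem_biUnion_heavySubcubes hw hfin t))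
    _ ≤ ν (⋃ J ∈ T, dCube d J) :=
        measure_biUnion_dCube_le_of_maximalCubes (fun J hJ => hJ.1) hcube
    _ ≤ ν Set.univ := measure_mono (Set.subset_univ _)
    _ = 2 ^ (d + 1) * t * μ {y | t < B * w y} := by
        simp only [ν, Measure.smul_apply, smul_eq_mul, Measure.restrict_apply_univ]

theorem IsDyadicAInfty.setLAverage_rpow_le (h : IsDyadicAInfty w B) (hw : AEMeasurable w)
    (hB : 1 ≤ B) (hδ : 0 < δ) (hsmall : 2 * (2 ^ (d + 1) * ENNReal.ofReal δ * B ^ (1 + δ)) ≤ 1)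
    (I : ℤ × (Fin d → ℤ)) :
    ⨍⁻ y in dCube d I, w y ^ (1 + δ) ∂volume ≤
      2 * (⨍⁻ y in dCube d I, w y ∂volume) ^ (1 + δ) := by
  by_cases hfin : ∫⁻ y in dCube d I, w y = ∞
  · rw [setLAverage_eq _ w, hfin, ENNReal.top_div_of_ne_top (volume_dCube_ne_top I),
      ENNReal.top_rpow_of_pos (by positivity), ENNReal.mul_top two_ne_zero]
    exact le_top
  · have key := lintegral_rpow_one_add_le_of_meas_lt_le hw.restrict hfin hB hδ
      (fun t _ ht => h.withDensity_lt_le hw hfin ht) hsmall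
    rw [setLAverage_eq, ENNReal.rpow_add_of_nonneg _ _ zero_le_one hδ.le, ENNReal.rpow_one]
    refine (ENNReal.div_le_div_right key _).trans_eq ?_
    conv_rhs => enter [2, 1]; rw [setLAverage_eq]
    simp only [div_eq_mul_inv]
    ring

theorem rpow_one_add_le_two_mul {b : ℝ} (hb : 1 ≤ b) (hδ : 0 ≤ δ) (hbδ : b * δ ≤ 1) :
    b ^ (1 + δ) ≤ 2 * b := by
  have hexp : b ≤ 2 ^ b := by
    have := one_add_mul_self_le_rpow_one_add (s := 1) (by norm_num) hb
    norm_num at this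
    linarith
  have hpow : b ^ δ ≤ 2 := by
    calc b ^ δ ≤ (2 ^ b) ^ δ := by gcongr
      _ = 2 ^ (b * δ) := by rw [Real.rpow_mul zero_le_two]
      _ ≤ 2 := by simpa using Real.rpow_le_rpow_of_exponent_le one_le_two hbδ
  rw [Real.rpow_add (by positivity), Real.rpow_one, mul_comm]
  gcongr

end ReverseHolder

section QuadraticForms

variable {n : ℕ} {M P R : Matrix (Fin n) (Fin n) ℂ}

/-- The Hermitian form `Re ⟨v, M v⟩` of a matrix; for positive definite `M` it is `|M^{1/2} v|²`. -/
noncomputable def quadForm (M : Matrix (Fin n) (Fin n) ℂ) (v : Fin n → ℂ) : ℝ :=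
  (star v ⬝ᵥ M *ᵥ v).re

theorem vecNorm_nonneg (u : Fin n → ℂ) : 0 ≤ vecNorm u := norm_nonneg _

theorem vecNorm_sq (u : Fin n → ℂ) : vecNorm u ^ 2 = (star u ⬝ᵥ u).re := by
  simp [vecNorm, EuclideanSpace.norm_sq_eq, dotProduct, Complex.sq_norm, Complex.normSq_apply]

theorem norm_star_dotProduct_le (u v : Fin n → ℂ) : ‖star u ⬝ᵥ v‖ ≤ vecNorm u * vecNorm v := by
  rw [dotProduct_comm]
  exact norm_inner_le_norm (𝕜 := ℂ) ((WithLp.equiv 2 (Fin n → ℂ)).symm u)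
    ((WithLp.equiv 2 (Fin n → ℂ)).symm v)

theorem vecNorm_mulVec_le (M : Matrix (Fin n) (Fin n) ℂ) (v : Fin n → ℂ) :
    vecNorm (M *ᵥ v) ≤ matNorm M * vecNorm v :=
  (Matrix.toEuclideanCLM (𝕜 := ℂ) M).le_opNorm ((WithLp.equiv 2 (Fin n → ℂ)).symm v)

theorem vecNorm_le_sum_norm (u : Fin n → ℂ) : vecNorm u ≤ ∑ i, ‖u i‖ := by
  refine le_of_sq_le_sq ?_ (Finset.sum_nonneg fun i _ => norm_nonneg _)
  rw [vecNorm, EuclideanSpace.norm_sq_eq]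
  exact Finset.sum_sq_le_sq_sum_of_nonneg fun i _ => norm_nonneg _

theorem star_mulVec_dotProduct (M : Matrix (Fin n) (Fin n) ℂ) (u v : Fin n → ℂ) :
    star (M *ᵥ u) ⬝ᵥ v = star u ⬝ᵥ Mᴴ *ᵥ v := by
  rw [star_mulVec, dotProduct_mulVec]

theorem vecNorm_mulVec_le_sum_conjTranspose (M : Matrix (Fin n) (Fin n) ℂ) (v : Fin n → ℂ) :
    vecNorm (M *ᵥ v) ≤ ∑ i, vecNorm (Mᴴ *ᵥ Pi.single i 1) * vecNorm v := by
  refine (vecNorm_le_sum_norm _).trans (Finset.sum_le_sum fun i _ => ?_)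
  have hrow : (M *ᵥ v) i = star (Mᴴ *ᵥ Pi.single i 1) ⬝ᵥ v := by
    rw [star_mulVec_dotProduct, conjTranspose_conjTranspose]
    simp
  rw [hrow]
  exact norm_star_dotProduct_le _ _

theorem quadForm_conjTranspose_mul_self (M : Matrix (Fin n) (Fin n) ℂ) (v : Fin n → ℂ) :
    quadForm (Mᴴ * M) v = vecNorm (M *ᵥ v) ^ 2 := by
  rw [quadForm, vecNorm_sq, star_mulVec_dotProduct, mulVec_mulVec]

theorem quadForm_mul_self (hP : P.IsHermitian) (v : Fin n → ℂ) :
    quadForm (P * P) v = vecNorm (P *ᵥ v) ^ 2 := by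
  rw [← quadForm_conjTranspose_mul_self, hP.eq]

theorem quadForm_nonneg (hM : M.PosSemidef) (v : Fin n → ℂ) : 0 ≤ quadForm M v :=
  hM.re_dotProduct_nonneg v

theorem quadForm_smul (c : ℝ) (M : Matrix (Fin n) (Fin n) ℂ) (v : Fin n → ℂ) :
    quadForm (c • M) v = c * quadForm M v := by
  rw [quadForm, smul_mulVec, dotProduct_smul, Complex.smul_re, smul_eq_mul, quadForm]

theorem quadForm_eq_sum (M : Matrix (Fin n) (Fin n) ℂ) (v : Fin n → ℂ) :
    quadForm M v = ∑ i, ∑ j, (star (v i) * v j * M i j).re := by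
  simp only [quadForm, dotProduct, mulVec, Finset.mul_sum, Pi.star_apply, Complex.re_sum,
    mul_assoc, mul_comm (v _)]

open scoped MatrixOrder in
theorem re_star_dotProduct_mulVec_sq_le (hM : M.PosSemidef) (u v : Fin n → ℂ) :
    (star u ⬝ᵥ M *ᵥ v).re ^ 2 ≤ quadForm M u * quadForm M v := by
  obtain ⟨N, hN⟩ := CStarAlgebra.nonneg_iff_eq_star_mul_self.1 hM.nonneg
  rw [hN, star_eq_conjTranspose, quadForm_conjTranspose_mul_self, quadForm_conjTranspose_mul_self,
    ← mulVec_mulVec, ← star_mulVec_dotProduct, ← mul_pow]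
  exact sq_le_sq.2 (((Complex.abs_re_le_norm _).trans (norm_star_dotProduct_le _ _)).trans
    (le_abs_self _))

theorem re_star_dotProduct_sq_le (hM : M.PosDef) (u v : Fin n → ℂ) :
    (star u ⬝ᵥ v).re ^ 2 ≤ quadForm M⁻¹ u * quadForm M v := by
  have hinv : M⁻¹ *ᵥ (M *ᵥ v) = v := by
    rw [mulVec_mulVec, nonsing_inv_mul _ ((isUnit_iff_isUnit_det M).1 hM.isUnit), one_mulVec]
  have hform : quadForm M⁻¹ (M *ᵥ v) = quadForm M v := by
    rw [quadForm, hinv, star_mulVec_dotProduct, hM.isHermitian.eq, quadForm]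
  simpa only [hinv, hform] using re_star_dotProduct_mulVec_sq_le hM.inv.posSemidef u (M *ᵥ v)

theorem quadForm_mulVec_of_mul_self_eq_inv (hR : R.PosDef) (hRM : R * R = M⁻¹) (v : Fin n → ℂ) :
    quadForm M (R *ᵥ v) = vecNorm v ^ 2 := by
  have hM : IsUnit M := isUnit_nonsing_inv_iff.1 (hRM ▸ hR.isUnit.mul hR.isUnit)
  have hRMR : R * M * R = 1 := by
    refine mul_eq_one_comm.1 ?_
    rw [← mul_assoc, hRM, nonsing_inv_mul _ ((isUnit_iff_isUnit_det M).1 hM)]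
  rw [quadForm, star_mulVec_dotProduct, hR.isHermitian.eq, mulVec_mulVec, mulVec_mulVec, hRMR,
    one_mulVec, vecNorm_sq]

theorem quadForm_mul_self_mulVec_le {S T : Matrix (Fin n) (Fin n) ℂ} (hS : S.IsHermitian)
    (hT : T.IsHermitian) (v : Fin n → ℂ) :
    quadForm (S * S) ((T * T) *ᵥ v) ≤ matNorm (S * T) ^ 2 * quadForm (T * T) v := by
  rw [quadForm_mul_self hS, quadForm_mul_self hT, ← mul_pow, mulVec_mulVec, ← mul_assoc,
    ← mulVec_mulVec]
  exact pow_le_pow_left₀ (vecNorm_nonneg _) (vecNorm_mulVec_le _ _) 2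

theorem vecENorm_mulVec_mulVec_le (hR : R.IsHermitian) (hP : P.IsHermitian) (v : Fin n → ℂ) :
    vecENorm (R *ᵥ (P *ᵥ v)) ≤
      ∑ i, ENNReal.ofReal (quadForm (P * P) (R *ᵥ Pi.single i 1)) ^ (1 / 2 : ℝ) * vecENorm v := by
  have hsqrt (i : Fin n) :
      ENNReal.ofReal (quadForm (P * P) (R *ᵥ Pi.single i 1)) ^ (1 / 2 : ℝ) * vecENorm v =
        ENNReal.ofReal (vecNorm ((R * P)ᴴ *ᵥ Pi.single i 1) * vecNorm v) := by
    rw [quadForm_mul_self hP, ENNReal.ofReal_rpow_of_nonneg (by positivity) (by norm_num),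
      ← Real.sqrt_eq_rpow, Real.sqrt_sq (vecNorm_nonneg _), conjTranspose_mul, hR.eq, hP.eq,
      mulVec_mulVec, ENNReal.ofReal_mul (vecNorm_nonneg _), vecENorm]
  simp only [hsqrt]
  rw [← ENNReal.ofReal_sum_of_nonneg fun i _ => mul_nonneg (vecNorm_nonneg _) (vecNorm_nonneg _),
    vecENorm, mulVec_mulVec]
  exact ENNReal.ofReal_le_ofReal (vecNorm_mulVec_le_sum_conjTranspose _ _)

end QuadraticForms

section Averages

variable {α : Type*} [MeasurableSpace α] {μ : Measure α} {n d : ℕ}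

theorem measurable_vecENorm {f : α → Fin n → ℂ} (hf : Measurable f) :
    Measurable fun x => vecENorm (f x) :=
  ((WithLp.measurable_toLp 2 (Fin n → ℂ)).comp hf).norm.ennreal_ofReal

theorem integrable_quadForm {F : α → Matrix (Fin n) (Fin n) ℂ}
    (hF : ∀ i j, Integrable (fun x => F x i j) μ) (v : Fin n → ℂ) :
    Integrable (fun x => quadForm (F x) v) μ := by
  simp only [quadForm_eq_sum]
  exact integrable_finsetSum _ fun i _ => integrable_finsetSum _ fun j _ =>
    ((hF i j).const_mul _).re

theorem integral_quadForm {F : α → Matrix (Fin n) (Fin n) ℂ}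
    (hF : ∀ i j, Integrable (fun x => F x i j) μ) (v : Fin n → ℂ) :
    ∫ x, quadForm (F x) v ∂μ = quadForm (Matrix.of fun i j => ∫ x, F x i j ∂μ) v := by
  have hterm (i j : Fin n) : Integrable (fun x => star (v i) * v j * F x i j) μ :=
    (hF i j).const_mul _
  have hre (i j : Fin n) : Integrable (fun x => (star (v i) * v j * F x i j).re) μ := (hterm i j).re
  simp only [quadForm_eq_sum, Matrix.of_apply]
  rw [integral_finsetSum _ fun i _ => integrable_finsetSum _ fun j _ => hre i j]
  refine Finset.sum_congr rfl fun i _ => ?_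
  rw [integral_finsetSum _ fun j _ => hre i j]
  refine Finset.sum_congr rfl fun j _ => ?_
  rw [← integral_const_mul]
  exact integral_re (hterm i j)

theorem setLAverage_quadForm {F : (Fin d → ℝ) → Matrix (Fin n) (Fin n) ℂ} {s : Set (Fin d → ℝ)}
    (hpos : ∀ x, (F x).PosSemidef) (hF : ∀ i j, IntegrableOn (fun x => F x i j) s)
    (v : Fin n → ℂ) :
    ⨍⁻ x in s, ENNReal.ofReal (quadForm (F x) v) ∂volume =
      ENNReal.ofReal (quadForm (mavg s F) v) := by
  have hmavg : mavg s F = (volume s).toReal⁻¹ • Matrix.of fun i j => ∫ x in s, F x i j := rfl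
  rw [setLAverage_eq, ← ofReal_setAverage (integrable_quadForm hF v)
    (.of_forall fun x => quadForm_nonneg (hpos x) v), setAverage_eq, integral_quadForm hF, hmavg,
    quadForm_smul, smul_eq_mul, measureReal_def]

theorem measure_univ_le_two_mul_of_sq_le_mul [IsFiniteMeasure μ] {f g : α → ℝ≥0∞} {a A : ℝ≥0∞}
    (hf : AEMeasurable f μ) (ha : a ≠ ∞) (hA : A ≠ 0) (hA' : A ≠ ∞)
    (havg : ∫⁻ x, f x ∂μ ≤ A * a * μ Set.univ) (hfg : ∀ x, a ^ 2 ≤ f x * g x) :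
    μ Set.univ ≤ 2 * μ {x | a ≤ 2 * A * g x} := by
  rcases eq_or_ne a 0 with rfl | ha0
  · simpa using le_mul_of_one_le_left' (a := μ Set.univ) one_le_two
  have hsub : {x | a ≤ 2 * A * g x}ᶜ ⊆ {x | 2 * (A * a) ≤ f x} := fun x hx => by
    have hx : 2 * A * g x < a := not_le.1 hx
    refine (ENNReal.mul_le_mul_iff_left ha0 ha).1 ?_
    calc 2 * (A * a) * a = 2 * A * a ^ 2 := by ring
      _ ≤ 2 * A * (f x * g x) := by gcongr; exact hfg x
      _ = f x * (2 * A * g x) := by ring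
      _ ≤ f x * a := by gcongr
  have hlight : 2 * μ {x | a ≤ 2 * A * g x}ᶜ ≤ μ Set.univ := by
    refine (ENNReal.mul_le_mul_iff_right (mul_ne_zero hA ha0) (ENNReal.mul_ne_top hA' ha)).1 ?_
    calc A * a * (2 * μ {x | a ≤ 2 * A * g x}ᶜ) = 2 * (A * a) * μ {x | a ≤ 2 * A * g x}ᶜ := by ring
      _ ≤ 2 * (A * a) * μ {x | 2 * (A * a) ≤ f x} := by gcongr
      _ ≤ ∫⁻ x, f x ∂μ := mul_meas_ge_le_lintegral₀ hf _
      _ ≤ A * a * μ Set.univ := havg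
  refine (ENNReal.add_le_add_iff_right (measure_ne_top μ Set.univ)).1 ?_
  calc μ Set.univ + μ Set.univ = 2 * μ ({x | a ≤ 2 * A * g x} ∪ {x | a ≤ 2 * A * g x}ᶜ) := by
        rw [Set.union_compl_self, two_mul]
    _ ≤ 2 * (μ {x | a ≤ 2 * A * g x} + μ {x | a ≤ 2 * A * g x}ᶜ) := by
        gcongr; exact measure_union_le _ _
    _ ≤ 2 * μ {x | a ≤ 2 * A * g x} + μ Set.univ := by rw [mul_add]; gcongr

theorem aemeasurable_of_forall_dCube {β : Type*} [MeasurableSpace β] {g : (Fin d → ℝ) → β}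
    (h : ∀ J, AEMeasurable g (volume.restrict (dCube d J))) : AEMeasurable g := by
  have hU : (⋃ J, dCube d J) = Set.univ :=
    Set.eq_univ_of_forall fun x => Set.mem_iUnion.2 ⟨_, mem_dCube_dyadicIndex 0 x⟩
  rwa [← Measure.restrict_univ (μ := volume), ← hU, aemeasurable_iUnion_iff]

end Averages

section MatrixWeights

variable {d n : ℕ} {W : (Fin d → ℝ) → Matrix (Fin n) (Fin n) ℂ} {A : ℝ}

/-- The dyadic matrix `A₂` condition with characteristic at most `A`, with the operator norm bound
`‖(m_I W)^{1/2} (m_I W⁻¹)^{1/2}‖² ≤ A` written as an inequality of quadratic forms in order to avoid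
square roots. -/
structure IsDyadicMatrixA2 (W : (Fin d → ℝ) → Matrix (Fin n) (Fin n) ℂ) (A : ℝ) : Prop where
  posDef : ∀ x, (W x).PosDef
  integrableOn : ∀ I i j, IntegrableOn (fun x => W x i j) (dCube d I)
  integrableOn_inv : ∀ I i j, IntegrableOn (fun x => (W x)⁻¹ i j) (dCube d I)
  quadForm_mavg_le : ∀ I v,
    quadForm (mavg (dCube d I) W) ((mavg (dCube d I) fun x => (W x)⁻¹) *ᵥ v) ≤
      A * quadForm (mavg (dCube d I) fun x => (W x)⁻¹) v

theorem isDyadicMatrixA2_of_matNorm_sq_le {S T : ℤ × (Fin d → ℤ) → Matrix (Fin n) (Fin n) ℂ}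
    (hW : ∀ x, (W x).PosDef)
    (hint : ∀ I i j, IntegrableOn (fun x => W x i j) (dCube d I))
    (hint' : ∀ I i j, IntegrableOn (fun x => (W x)⁻¹ i j) (dCube d I))
    (hS : ∀ I, (S I).IsHermitian ∧ S I * S I = mavg (dCube d I) W)
    (hT : ∀ I, (T I).IsHermitian ∧ T I * T I = mavg (dCube d I) fun x => (W x)⁻¹)
    (hA : ∀ I, matNorm (S I * T I) ^ 2 ≤ A) : IsDyadicMatrixA2 W A := by
  refine ⟨hW, hint, hint', fun I v => ?_⟩
  rw [← (hS I).2, ← (hT I).2]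
  refine (quadForm_mul_self_mulVec_le (hS I).1 (hT I).1 v).trans
    (mul_le_mul_of_nonneg_right (hA I) ?_)
  rw [quadForm_mul_self (hT I).1]
  positivity

theorem IsDyadicMatrixA2.aemeasurable_quadForm_inv (hW : IsDyadicMatrixA2 W A) (v : Fin n → ℂ) :
    AEMeasurable fun y => ENNReal.ofReal (quadForm (W y)⁻¹ v) :=
  aemeasurable_of_forall_dCube fun J =>
    (integrable_quadForm (hW.integrableOn_inv J) v).aemeasurable.ennreal_ofReal

theorem IsDyadicMatrixA2.setLAverage_quadForm_inv (hW : IsDyadicMatrixA2 W A)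
    (I : ℤ × (Fin d → ℤ)) (v : Fin n → ℂ) :
    ⨍⁻ y in dCube d I, ENNReal.ofReal (quadForm (W y)⁻¹ v) ∂volume =
      ENNReal.ofReal (quadForm (mavg (dCube d I) fun y => (W y)⁻¹) v) :=
  setLAverage_quadForm (fun x => (hW.posDef x).inv.posSemidef) (hW.integrableOn_inv I) v

theorem IsDyadicMatrixA2.isDyadicAInfty (hW : IsDyadicMatrixA2 W A) (hA : 0 < A)
    (v : Fin n → ℂ) :
    IsDyadicAInfty (fun y => ENNReal.ofReal (quadForm (W y)⁻¹ v)) (ENNReal.ofReal (2 * A)) := by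
  intro J
  let μ := volume.restrict (dCube d J)
  have : IsFiniteMeasure μ := ⟨by simpa [μ] using (volume_dCube_ne_top J).lt_top⟩
  set u := (mavg (dCube d J) fun y => (W y)⁻¹) *ᵥ v
  set a := quadForm (mavg (dCube d J) fun y => (W y)⁻¹) v
  have hint : ∫⁻ y, ENNReal.ofReal (quadForm (W y) u) ∂μ ≤
      ENNReal.ofReal A * ENNReal.ofReal a * μ Set.univ := by
    rw [← measure_mul_setLAverage _ (volume_dCube_ne_top J),
      setLAverage_quadForm (fun x => (hW.posDef x).posSemidef) (hW.integrableOn J) u,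
      mul_comm, Measure.restrict_apply_univ, ← ENNReal.ofReal_mul hA.le]
    gcongr
    exact hW.quadForm_mavg_le J v
  have hCS (y : Fin d → ℝ) : ENNReal.ofReal a ^ 2 ≤
      ENNReal.ofReal (quadForm (W y) u) * ENNReal.ofReal (quadForm (W y)⁻¹ v) := by
    rcases le_total a 0 with ha | ha
    · simp [ENNReal.ofReal_of_nonpos ha]
    · rw [mul_comm, ← ENNReal.ofReal_mul (quadForm_nonneg (hW.posDef y).inv.posSemidef v),
        ← ENNReal.ofReal_pow ha]
      exact ENNReal.ofReal_le_ofReal (re_star_dotProduct_sq_le (hW.posDef y) v u)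
  have key := measure_univ_le_two_mul_of_sq_le_mul
    (integrable_quadForm (hW.integrableOn J) u).aemeasurable.ennreal_ofReal ENNReal.ofReal_ne_top
    (ENNReal.ofReal_pos.2 hA).ne' ENNReal.ofReal_ne_top hint hCS
  rw [Measure.restrict_apply_univ, Measure.restrict_apply' (measurableSet_dCube J),
    Set.inter_comm] at key
  simp only [hW.setLAverage_quadForm_inv J, ENNReal.ofReal_mul zero_le_two, ENNReal.ofReal_ofNat]
  exact key

end MatrixWeights

section Domination

variable {d n : ℕ} {ε A : ℝ} {W P : (Fin d → ℝ) → Matrix (Fin n) (Fin n) ℂ}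
  {R : ℤ × (Fin d → ℤ) → Matrix (Fin n) (Fin n) ℂ} {f : (Fin d → ℝ) → Fin n → ℂ}

theorem lintegral_rpow_half_mul_le {α : Type*} [MeasurableSpace α] {μ : Measure α}
    {w g : α → ℝ≥0∞} (hw : AEMeasurable w μ) (hg : AEMeasurable g μ) (hε : 0 < ε) :
    ∫⁻ y, w y ^ (1 / 2 : ℝ) * g y ∂μ ≤
      (∫⁻ y, w y ^ (1 + ε / 2) ∂μ) ^ (1 / (2 + ε)) *
        (∫⁻ y, g y ^ ((2 + ε) / (1 + ε)) ∂μ) ^ ((1 + ε) / (2 + ε)) := by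
  have hpq : (2 + ε).HolderConjugate ((2 + ε) / (1 + ε)) := by
    refine Real.holderConjugate_iff.2 ⟨by linarith, ?_⟩
    field_simp
    ring
  have hpow (y : α) : (w y ^ (1 / 2 : ℝ)) ^ (2 + ε) = w y ^ (1 + ε / 2) := by
    rw [← ENNReal.rpow_mul]
    ring_nf
  simpa only [hpow, one_div_div, Pi.mul_apply] using
    ENNReal.lintegral_mul_le_Lp_mul_Lq μ hpq (hw.pow_const (1 / 2 : ℝ)) hg

theorem IsDyadicMatrixA2.setLAverage_rpow_quadForm_inv_le (hW : IsDyadicMatrixA2 W A) (hA : 1 ≤ A)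
    (hε : 0 < ε) (hsmall : 2 ^ (d + 3) * A * ε ≤ 1) (I : ℤ × (Fin d → ℤ)) (v : Fin n → ℂ) :
    ⨍⁻ y in dCube d I, ENNReal.ofReal (quadForm (W y)⁻¹ v) ^ (1 + ε / 2) ∂volume ≤
      2 * (⨍⁻ y in dCube d I, ENNReal.ofReal (quadForm (W y)⁻¹ v) ∂volume) ^ (1 + ε / 2) := by
  refine (hW.isDyadicAInfty (by linarith) v).setLAverage_rpow_le (hW.aemeasurable_quadForm_inv v)
    (ENNReal.one_le_ofReal.2 (by linarith)) (half_pos hε) ?_ I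
  have hA' : (2 * A) ^ (1 + ε / 2) ≤ 2 * (2 * A) := by
    have : (1 : ℝ) ≤ 2 ^ (d + 3) := one_le_pow₀ one_le_two
    refine rpow_one_add_le_two_mul (by linarith) (by positivity) ?_
    nlinarith [mul_pos (by linarith : 0 < A) hε]
  rw [ENNReal.ofReal_rpow_of_nonneg (by linarith) (by linarith)]
  calc 2 * (2 ^ (d + 1) * ENNReal.ofReal (ε / 2) * ENNReal.ofReal ((2 * A) ^ (1 + ε / 2)))
      = ENNReal.ofReal (2 * (2 ^ (d + 1) * (ε / 2) * (2 * A) ^ (1 + ε / 2))) := by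
        rw [ENNReal.ofReal_mul (by positivity), ENNReal.ofReal_mul (by positivity),
          ENNReal.ofReal_mul (by positivity), ENNReal.ofReal_pow zero_le_two, ENNReal.ofReal_ofNat]
    _ ≤ ENNReal.ofReal (2 * (2 ^ (d + 1) * (ε / 2) * (2 * (2 * A)))) := by gcongr
    _ = ENNReal.ofReal (2 ^ (d + 3) * A * ε) := by ring_nf
    _ ≤ 1 := ENNReal.ofReal_le_one.2 hsmall

theorem IsDyadicMatrixA2.setLAverage_quadForm_inv_rpow_half_mul_le (hW : IsDyadicMatrixA2 W A)
    (hA : 1 ≤ A) (hε : 0 < ε) (hsmall : 2 ^ (d + 3) * A * ε ≤ 1) {I : ℤ × (Fin d → ℤ)}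
    {v : Fin n → ℂ} (hv : ⨍⁻ y in dCube d I, ENNReal.ofReal (quadForm (W y)⁻¹ v) ∂volume = 1)
    {g : (Fin d → ℝ) → ℝ≥0∞} (hg : AEMeasurable g) :
    ⨍⁻ y in dCube d I, ENNReal.ofReal (quadForm (W y)⁻¹ v) ^ (1 / 2 : ℝ) * g y ∂volume ≤
      2 * (⨍⁻ y in dCube d I, g y ^ ((2 + ε) / (1 + ε)) ∂volume) ^ ((1 + ε) / (2 + ε)) := by
  have hRH := hW.setLAverage_rpow_quadForm_inv_le hA hε hsmall I v
  rw [hv, ENNReal.one_rpow, mul_one] at hRH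
  have htwo : (2 : ℝ≥0∞) ^ (1 / (2 + ε)) ≤ 2 := by
    refine (ENNReal.rpow_le_rpow_of_exponent_le one_le_two ?_).trans_eq (ENNReal.rpow_one 2)
    rw [div_le_one (by positivity)]
    linarith
  have hHolder := lintegral_rpow_half_mul_le
    ((hW.aemeasurable_quadForm_inv v).restrict (s := dCube d I) |>.smul_measure
      (volume.restrict (dCube d I) Set.univ)⁻¹)
    (hg.restrict (s := dCube d I) |>.smul_measure _) hε
  exact hHolder.trans
    (mul_le_mul_left ((ENNReal.rpow_le_rpow hRH (by positivity)).trans htwo) _)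

theorem IsDyadicMatrixA2.MWaux_le (hW : IsDyadicMatrixA2 W A) (hA : 1 ≤ A) (hε : 0 < ε)
    (hsmall : 2 ^ (d + 3) * A * ε ≤ 1) (hP : ∀ y, (P y).IsHermitian ∧ P y * P y = (W y)⁻¹)
    (hR : ∀ I, (R I).PosDef ∧ R I * R I = (mavg (dCube d I) fun y => (W y)⁻¹)⁻¹)
    (hf : Measurable f) (x : Fin d → ℝ) :
    MWaux R P f x ≤ ENNReal.ofReal (2 * n) *
      dyadicMax (fun y => vecENorm (f y) ^ ((2 + ε) / (1 + ε))) x ^ ((1 + ε) / (2 + ε)) := by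
  refine iSup₂_le fun I hxI => ?_
  have hvec := (measurable_vecENorm hf).aemeasurable (μ := volume)
  let w (i : Fin n) (y : Fin d → ℝ) := ENNReal.ofReal (quadForm (W y)⁻¹ (R I *ᵥ Pi.single i 1))
  have hw (i : Fin n) : AEMeasurable (w i) := hW.aemeasurable_quadForm_inv _
  have hnorm (i : Fin n) : ⨍⁻ y in dCube d I, w i y ∂volume = 1 := by
    rw [hW.setLAverage_quadForm_inv, quadForm_mulVec_of_mul_self_eq_inv (hR I).1 (hR I).2]
    simp [vecNorm]
  rw [inv_volume_mul_setLIntegral_dCube]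
  calc ⨍⁻ y in dCube d I, vecENorm (R I *ᵥ (P y *ᵥ f y)) ∂volume
      ≤ ⨍⁻ y in dCube d I, ∑ i, w i y ^ (1 / 2 : ℝ) * vecENorm (f y) ∂volume := by
        refine lintegral_mono fun y => ?_
        simpa only [(hP y).2] using
          vecENorm_mulVec_mulVec_le (hR I).1.isHermitian (hP y).1 (f y)
    _ = ∑ i, ⨍⁻ y in dCube d I, w i y ^ (1 / 2 : ℝ) * vecENorm (f y) ∂volume :=
        lintegral_finsetSum' _ fun i _ =>
          (((hw i).pow_const _).mul hvec).restrict.smul_measure _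
    _ ≤ ∑ _i : Fin n, 2 * dyadicMax (fun y => vecENorm (f y) ^ ((2 + ε) / (1 + ε))) x
          ^ ((1 + ε) / (2 + ε)) := by
        gcongr with i
        refine (hW.setLAverage_quadForm_inv_rpow_half_mul_le hA hε hsmall (hnorm i) hvec).trans ?_
        gcongr
        exact setLAverage_le_dyadicMax _ hxI
    _ = _ := by
        rw [Finset.sum_const, Finset.card_univ, Fintype.card_fin, nsmul_eq_mul,
          ENNReal.ofReal_mul zero_le_two, ENNReal.ofReal_ofNat, ENNReal.ofReal_natCast]
        ring

theorem lintegral_dyadicMax_rpow_sq_le {g : (Fin d → ℝ) → ℝ≥0∞} (hg : AEMeasurable g)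
    (hε : 0 < ε) :
    ∫⁻ x, (dyadicMax (fun y => g y ^ ((2 + ε) / (1 + ε))) x ^ ((1 + ε) / (2 + ε))) ^ 2 ≤
      ENNReal.ofReal (8 * (2 + ε) / ε) * ∫⁻ x, g x ^ 2 := by
  set r : ℝ := (1 + ε) / (2 + ε) * 2
  have hr : r - 1 = ε / (2 + ε) := by simp only [r]; field_simp; ring
  have hr1 : 1 < r := by linarith [show 0 < ε / (2 + ε) by positivity]
  have hr2 : r ≤ 2 := by
    linarith [show ε / (2 + ε) ≤ 1 by rw [div_le_one (by positivity)]; linarith]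
  have hexp : (2 + ε) / (1 + ε) * r = 2 := by simp only [r]; field_simp
  have hconst : (2 : ℝ) ^ r * (r / (r - 1)) ≤ 8 * (2 + ε) / ε := by
    have hpow : (2 : ℝ) ^ r ≤ 4 := by
      calc (2 : ℝ) ^ r ≤ 2 ^ (2 : ℝ) := by gcongr; exact one_le_two
        _ = 4 := by norm_num
    calc (2 : ℝ) ^ r * (r / (r - 1)) ≤ 4 * (2 / (r - 1)) := by gcongr
      _ = 8 * (2 + ε) / ε := by rw [hr]; field_simp; norm_num
  simp only [← ENNReal.rpow_natCast, ← ENNReal.rpow_mul, Nat.cast_ofNat]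
  refine (lintegral_dyadicMax_rpow_le (hg.pow_const _) hr1).trans ?_
  simp only [← ENNReal.rpow_mul, hexp]
  gcongr

theorem IsDyadicMatrixA2.lintegral_MWaux_sq_le (hW : IsDyadicMatrixA2 W A) (hA : 1 ≤ A)
    (hP : ∀ y, (P y).IsHermitian ∧ P y * P y = (W y)⁻¹)
    (hR : ∀ I, (R I).PosDef ∧ R I * R I = (mavg (dCube d I) fun y => (W y)⁻¹)⁻¹)
    (hf : Measurable f) :
    ∫⁻ x, MWaux R P f x ^ 2 ≤
      ENNReal.ofReal (96 * 2 ^ (d + 3) * n ^ 2 * A) * ∫⁻ x, vecENorm (f x) ^ 2 := by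
  set K : ℝ := 2 ^ (d + 3) * A with hK
  have hK1 : 1 ≤ K := one_le_mul_of_one_le_of_one_le (one_le_pow₀ one_le_two) hA
  have hconst : (2 * n : ℝ) ^ 2 * (8 * (2 + K⁻¹) / K⁻¹) ≤ 96 * 2 ^ (d + 3) * n ^ 2 * A := by
    calc (2 * n : ℝ) ^ 2 * (8 * (2 + K⁻¹) / K⁻¹) = 32 * n ^ 2 * (2 * K + 1) := by field_simp; ring
      _ ≤ 32 * n ^ 2 * (2 * K + K) := by gcongr
      _ = 96 * 2 ^ (d + 3) * n ^ 2 * A := by rw [hK]; ring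
  have hK0 : 0 < K⁻¹ := by positivity
  let N x := dyadicMax (fun y => vecENorm (f y) ^ ((2 + K⁻¹) / (1 + K⁻¹))) x ^
    ((1 + K⁻¹) / (2 + K⁻¹))
  calc ∫⁻ x, MWaux R P f x ^ 2 ≤ ∫⁻ x, (ENNReal.ofReal (2 * n) * N x) ^ 2 := by
        gcongr with x
        exact hW.MWaux_le hA hK0 mul_inv_le_one hP hR hf x
    _ = ENNReal.ofReal (2 * n) ^ 2 * ∫⁻ x, N x ^ 2 := by
        simp only [mul_pow]
        exact lintegral_const_mul' _ _ (by finiteness)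
    _ ≤ ENNReal.ofReal (2 * n) ^ 2 *
          (ENNReal.ofReal (8 * (2 + K⁻¹) / K⁻¹) * ∫⁻ x, vecENorm (f x) ^ 2) := by
        gcongr
        exact lintegral_dyadicMax_rpow_sq_le (measurable_vecENorm hf).aemeasurable hK0
    _ = ENNReal.ofReal ((2 * n) ^ 2 * (8 * (2 + K⁻¹) / K⁻¹)) * ∫⁻ x, vecENorm (f x) ^ 2 := by
        rw [← mul_assoc, ← ENNReal.ofReal_pow (by positivity), ← ENNReal.ofReal_mul (by positivity)]
    _ ≤ ENNReal.ofReal (96 * 2 ^ (d + 3) * n ^ 2 * A) * ∫⁻ x, vecENorm (f x) ^ 2 := by gcongr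

end Domination

/-- Pointwise domination of the auxiliary maximal function for a matrix `A₂` weight `W`
(characteristic at most `Cw`): there are `ε ≈ Cw⁻¹` and a constant `c` (depending only on
`n`, `d`) with `M_W' f(x) ≤ c (M(|f|^{(2+ε)/(1+ε)})(x))^{(1+ε)/(2+ε)}`, and consequently
`‖M_W'‖²_{L²→L²} ≲ Cw`.  Here `Whalf = W^{1/2}`, `Winvhalf = W^{-1/2}`, `Sq I, Tq I` are the
square roots of `m_I W, m_I(W⁻¹)` and `R I = (m_I(W⁻¹))^{-1/2}`. -/
theorem stmt11 {d n : ℕ} :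
    ∃ c : ℝ, 0 < c ∧
      ∀ (W Whalf Winvhalf : (Fin d → ℝ) → Matrix (Fin n) (Fin n) ℂ),
        (∀ x, (W x).PosDef) →
        (∀ x, (Whalf x).PosDef ∧ Whalf x * Whalf x = W x) →
        (∀ x, (Winvhalf x).PosDef ∧ Winvhalf x * Winvhalf x = (W x)⁻¹) →
      ∀ Sq Tq R : ℤ × (Fin d → ℤ) → Matrix (Fin n) (Fin n) ℂ,
        (∀ I, (Sq I).PosDef ∧ Sq I * Sq I = mavg (dCube d I) W) →
        (∀ I, (Tq I).PosDef ∧ Tq I * Tq I = mavg (dCube d I) fun y => (W y)⁻¹) →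
        (∀ I, (R I).PosDef ∧ R I * R I = (mavg (dCube d I) fun y => (W y)⁻¹)⁻¹) →
      (∀ I i j, IntegrableOn (fun x => W x i j) (dCube d I) volume) →
      (∀ I i j, IntegrableOn (fun x => (W x)⁻¹ i j) (dCube d I) volume) →
      ∀ Cw : ℝ, 1 ≤ Cw →
      (∀ I, matNorm (Sq I * Tq I) ^ 2 ≤ Cw) →
      ∀ f : (Fin d → ℝ) → Fin n → ℂ, (∀ i, Measurable fun x => f x i) →
      ∃ ε : ℝ, 0 < ε ∧ c⁻¹ * Cw⁻¹ ≤ ε ∧ ε ≤ c * Cw⁻¹ ∧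
        (∀ x, MWaux R Winvhalf f x
            ≤ ENNReal.ofReal c *
              (dyadicMax (fun y => vecENorm (f y) ^ ((2 + ε) / (1 + ε))) x)
                ^ ((1 + ε) / (2 + ε))) ∧
        (∫⁻ x, (MWaux R Winvhalf f x) ^ (2 : ℕ))
          ≤ ENNReal.ofReal (c * Cw) * ∫⁻ x, vecENorm (f x) ^ (2 : ℕ) := by
  have hpow : (1 : ℝ) ≤ 2 ^ (d + 3) := one_le_pow₀ one_le_two
  refine ⟨96 * 2 ^ (d + 3) * (n ^ 2 + 1), by positivity, ?_⟩
  intro W Whalf Winvhalf hW _ hWi Sq Tq R hS hT hR hint hint' Cw hCw hA2 f hf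
  have hWA : IsDyadicMatrixA2 W Cw := isDyadicMatrixA2_of_matNorm_sq_le hW hint hint'
    (fun I => (hS I).imp_left PosDef.isHermitian) (fun I => (hT I).imp_left PosDef.isHermitian) hA2
  have hP (y : Fin d → ℝ) := (hWi y).imp_left PosDef.isHermitian
  have hf' : Measurable f := measurable_pi_iff.2 hf
  have hε : 0 < (2 ^ (d + 3) * Cw)⁻¹ := by positivity
  refine ⟨(2 ^ (d + 3) * Cw)⁻¹, hε, ?_, ?_, fun x => ?_, ?_⟩
  · rw [← mul_inv]
    gcongr
    nlinarith
  · rw [mul_inv]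
    gcongr
    exact (inv_le_one_of_one_le₀ hpow).trans (by nlinarith)
  · refine (hWA.MWaux_le hCw hε mul_inv_le_one hP hR hf' x).trans ?_
    gcongr
    · linarith
    · nlinarith [sq_nonneg ((n : ℝ) - 1)]
  · refine (hWA.lintegral_MWaux_sq_le hCw hP hR hf').trans ?_
    gcongr
    linarith
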